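/- For |p|<1 and nonzero complex numbers x, y, w, z, the Riemann addition relation holds: θ(xw;p)θ(x/w;p)θ(yz;p)θ(y/z;p) − θ(xz;p)θ(x/z;p)θ(yw;p)θ(y/w;p) = (y/w)·θ(xy;p)θ(x/y;p)θ(wz;p)θ(w/z;p). -/

import Mathlib

noncomputable def qPochhammerInf (z q : ℂ) : ℂ := ∏' j : ℕ, (1 - z * q ^ j)

noncomputable def theta (z p : ℂ) : ℂ :=
  ∏' j : ℕ, (1 - z * p ^ j) * (1 - p ^ (j + 1) * z⁻¹)

noncomputable def ellGamma (z p q : ℂ) : ℂ :=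
  ∏' jk : ℕ × ℕ,
    (1 - z⁻¹ * p ^ (jk.1 + 1) * q ^ (jk.2 + 1)) / (1 - z * p ^ jk.1 * q ^ jk.2)

/-!
The Jacobi triple product turns `theta` into a bilateral series `∑ q ^ (n (n - 1) / 2) u ^ n`. In
the product of two such series, the substitution `(m, n) = (k + l, k - l)` or `(k + l, k + 1 - l)`,
according to the parity of `m + n`, separates the variables, so that
`b * theta (a * b) p * theta (a / b) p` is a `2 × 2` determinant `F a * G b - G a * F b`. The
addition formula is then the Plücker relation between the `2 × 2` minors of the matrix with columns
`(F t, G t)`, where `t` runs through `x`, `y`, `w`, `z`.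
-/

open Filter Topology

section ThetaTerm

variable {K : Type*} [Field K] {q u v : K}

/-- The term of index `n` in the bilateral theta series `∑ q ^ (n (n - 1) / 2) u ^ n`. There is no
alternating sign: the series attached to `theta z p` has `u = -z`. -/
def thetaTerm (q u : K) (n : ℤ) : K := q ^ (n * (n - 1) / 2) * u ^ n

@[simp]
theorem thetaTerm_zero (q u : K) : thetaTerm q u 0 = 1 := by simp [thetaTerm]

@[simp]
theorem thetaTerm_one (q u : K) : thetaTerm q u 1 = u := by simp [thetaTerm]

theorem thetaTerm_ne_zero (hq0 : q ≠ 0) (hu : u ≠ 0) (n : ℤ) : thetaTerm q u n ≠ 0 :=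
  mul_ne_zero (zpow_ne_zero _ hq0) (zpow_ne_zero _ hu)

theorem thetaTerm_mul_left (q c u : K) (n : ℤ) :
    thetaTerm q (c * u) n = c ^ n * thetaTerm q u n := by
  rw [thetaTerm, thetaTerm, mul_zpow]
  ring

theorem thetaTerm_mul_thetaTerm (q u v : K) (n : ℤ) :
    thetaTerm q u n * thetaTerm q v n = thetaTerm (q ^ 2) (u * v) n := by
  simp only [thetaTerm, sq, mul_zpow]
  ring

theorem two_mul_mul_pred_ediv_two (n : ℤ) : 2 * (n * (n - 1) / 2) = n * (n - 1) :=
  Int.mul_ediv_cancel' (Int.even_mul_pred_self n).two_dvd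

theorem thetaTerm_add (hq0 : q ≠ 0) (hu : u ≠ 0) (m n : ℤ) :
    thetaTerm q u (m + n) = q ^ (m * n) * (thetaTerm q u m * thetaTerm q u n) := by
  have exponent : (m + n) * (m + n - 1) / 2 = m * n + m * (m - 1) / 2 + n * (n - 1) / 2 := by
    linarith [two_mul_mul_pred_ediv_two (m + n), two_mul_mul_pred_ediv_two m,
      two_mul_mul_pred_ediv_two n]
  rw [thetaTerm, thetaTerm, thetaTerm, exponent, zpow_add₀ hq0, zpow_add₀ hq0, zpow_add₀ hu]
  ring

theorem thetaTerm_add_one (hq0 : q ≠ 0) (hu : u ≠ 0) (n : ℤ) :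
    thetaTerm q u (n + 1) = q ^ n * (thetaTerm q u n * u) := by
  simpa using thetaTerm_add hq0 hu n 1

theorem thetaTerm_neg (hq0 : q ≠ 0) (u : K) (n : ℤ) :
    thetaTerm q u (-n) = thetaTerm q (q / u) n := by
  have exponent : -n * (-n - 1) / 2 = n * (n - 1) / 2 + n := by
    linarith [two_mul_mul_pred_ediv_two (-n), two_mul_mul_pred_ediv_two n]
  rw [thetaTerm, thetaTerm, exponent, zpow_add₀ hq0, div_zpow, zpow_neg]
  ring

theorem thetaTerm_add_mul_thetaTerm_sub (hq0 : q ≠ 0) (hu : u ≠ 0) (hv : v ≠ 0) (k l : ℤ) :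
    thetaTerm q u (k + l) * thetaTerm q v (k - l) =
      thetaTerm (q ^ 2) (u * v) k * thetaTerm (q ^ 2) (q * (u / v)) l := by
  have hqkl : q ^ (k * l) ≠ 0 := zpow_ne_zero _ hq0
  rw [sub_eq_add_neg, thetaTerm_add hq0 hu, thetaTerm_add hq0 hv, thetaTerm_neg hq0, mul_neg,
    zpow_neg, show q * (u / v) = u * (q / v) by ring, ← thetaTerm_mul_thetaTerm,
    ← thetaTerm_mul_thetaTerm]
  field_simp

theorem thetaTerm_add_mul_thetaTerm_add_one_sub (hq0 : q ≠ 0) (hu : u ≠ 0) (hv : v ≠ 0) (k l : ℤ) :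
    thetaTerm q u (k + l) * thetaTerm q v (k + 1 - l) =
      v * (thetaTerm (q ^ 2) (q * (u * v)) k * thetaTerm (q ^ 2) (u / v) l) := by
  have hql : q ^ l ≠ 0 := zpow_ne_zero _ hq0
  calc
    thetaTerm q u (k + l) * thetaTerm q v (k + 1 - l)
    _ = v * (q ^ k / q ^ l * (thetaTerm q u (k + l) * thetaTerm q v (k - l))) := by
      rw [add_sub_right_comm, thetaTerm_add_one hq0 hv, zpow_sub₀ hq0]
      ring
    _ = v * (q ^ k * thetaTerm (q ^ 2) (u * v) k * thetaTerm (q ^ 2) (u / v) l) := by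
      rw [thetaTerm_add_mul_thetaTerm_sub hq0 hu hv, thetaTerm_mul_left _ q (u / v)]
      field_simp
    _ = v * (thetaTerm (q ^ 2) (q * (u * v)) k * thetaTerm (q ^ 2) (u / v) l) := by
      rw [thetaTerm_mul_left _ q (u * v)]

end ThetaTerm

section ThetaSeries

theorem isCompl_range_add_sub_range_add_add_one_sub :
    IsCompl (Set.range fun c : ℤ × ℤ => (c.1 + c.2, c.1 - c.2))
      (Set.range fun c : ℤ × ℤ => (c.1 + c.2, c.1 + 1 - c.2)) := by
  constructor
  · rw [Set.disjoint_left]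
    rintro _ ⟨c, rfl⟩ ⟨d, h⟩
    simp only [Prod.mk.injEq] at h
    omega
  · rw [codisjoint_iff_le_sup]
    rintro ⟨m, n⟩ -
    rcases Int.even_or_odd' (m + n) with ⟨k, hk | hk⟩
    · exact Or.inl ⟨(k, m - k), by simp only [Prod.mk.injEq]; omega⟩
    · exact Or.inr ⟨(k, m - k), by simp only [Prod.mk.injEq]; omega⟩

theorem hasSum_int_prod_of_parity {M : Type*} [AddCommMonoid M] [TopologicalSpace M]
    [ContinuousAdd M] {f : ℤ × ℤ → M} {s t : M}
    (hs : HasSum (fun c : ℤ × ℤ => f (c.1 + c.2, c.1 - c.2)) s)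
    (ht : HasSum (fun c : ℤ × ℤ => f (c.1 + c.2, c.1 + 1 - c.2)) t) : HasSum f (s + t) := by
  have even_injective : Function.Injective fun c : ℤ × ℤ => (c.1 + c.2, c.1 - c.2) :=
    fun c d h => by
      simp only [Prod.mk.injEq] at h
      ext <;> omega
  have odd_injective : Function.Injective fun c : ℤ × ℤ => (c.1 + c.2, c.1 + 1 - c.2) :=
    fun c d h => by
      simp only [Prod.mk.injEq] at h
      ext <;> omega
  exact HasSum.add_isCompl isCompl_range_add_sub_range_add_add_one_sub
    (even_injective.hasSum_range_iff.mpr hs) (odd_injective.hasSum_range_iff.mpr ht)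

variable {𝕜 : Type*} [NormedField 𝕜] {q q' u v : 𝕜}

/-- The bilateral theta series `∑ q ^ (n (n - 1) / 2) u ^ n` over all integers `n`. -/
noncomputable def thetaSeries (q u : 𝕜) : 𝕜 := ∑' n : ℤ, thetaTerm q u n

theorem summable_norm_thetaTerm_natCast (hq0 : q ≠ 0) (hq : ‖q‖ < 1) (hu : u ≠ 0) :
    Summable fun n : ℕ => ‖thetaTerm q u n‖ := by
  have norm_ne_zero (n : ℕ) : ‖thetaTerm q u n‖ ≠ 0 :=
    norm_ne_zero_iff.mpr (thetaTerm_ne_zero hq0 hu n)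
  refine summable_of_ratio_test_tendsto_lt_one zero_lt_one (Eventually.of_forall norm_ne_zero) ?_
  have ratio_tendsto : Tendsto (fun n : ℕ => ‖q‖ ^ n * ‖u‖) atTop (𝓝 0) := by
    simpa using (tendsto_pow_atTop_nhds_zero_of_lt_one (norm_nonneg q) hq).mul_const ‖u‖
  refine ratio_tendsto.congr fun n => ?_
  have := norm_ne_zero n
  rw [norm_norm, norm_norm, Nat.cast_add_one, thetaTerm_add_one hq0 hu, norm_mul, norm_mul,
    zpow_natCast, norm_pow]
  field_simp

theorem summable_norm_thetaTerm (hq0 : q ≠ 0) (hq : ‖q‖ < 1) (hu : u ≠ 0) :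
    Summable fun n : ℤ => ‖thetaTerm q u n‖ := by
  refine Summable.of_nat_of_neg (summable_norm_thetaTerm_natCast hq0 hq hu) ?_
  simpa only [thetaTerm_neg hq0] using summable_norm_thetaTerm_natCast hq0 hq (div_ne_zero hq0 hu)

variable [CompleteSpace 𝕜]

theorem hasSum_thetaTerm_mul_thetaTerm (hq0 : q ≠ 0) (hq : ‖q‖ < 1) (hu : u ≠ 0) (hq0' : q' ≠ 0)
    (hq' : ‖q'‖ < 1) (hv : v ≠ 0) :
    HasSum (fun c : ℤ × ℤ => thetaTerm q u c.1 * thetaTerm q' v c.2)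
      (thetaSeries q u * thetaSeries q' v) :=
  have hsu := summable_norm_thetaTerm hq0 hq hu
  have hsv := summable_norm_thetaTerm hq0' hq' hv
  hsu.of_norm.hasSum.mul hsv.of_norm.hasSum (summable_mul_of_summable_norm hsu hsv)

theorem thetaSeries_mul_thetaSeries (hq0 : q ≠ 0) (hq : ‖q‖ < 1) (hu : u ≠ 0) (hv : v ≠ 0) :
    thetaSeries q u * thetaSeries q v =
      thetaSeries (q ^ 2) (u * v) * thetaSeries (q ^ 2) (q * (u / v)) +
        v * (thetaSeries (q ^ 2) (q * (u * v)) * thetaSeries (q ^ 2) (u / v)) := by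
  have hq2 : q ^ 2 ≠ 0 := pow_ne_zero 2 hq0
  have hq2' : ‖q ^ 2‖ < 1 := by
    rw [norm_pow]
    exact pow_lt_one₀ (norm_nonneg q) hq two_ne_zero
  have huv := mul_ne_zero hu hv
  have hudv := div_ne_zero hu hv
  refine (hasSum_thetaTerm_mul_thetaTerm hq0 hq hu hq0 hq hv).unique
    (hasSum_int_prod_of_parity ?_ ?_)
  · simp only [thetaTerm_add_mul_thetaTerm_sub hq0 hu hv]
    exact hasSum_thetaTerm_mul_thetaTerm hq2 hq2' huv hq2 hq2' (mul_ne_zero hq0 hudv)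
  · simp only [thetaTerm_add_mul_thetaTerm_add_one_sub hq0 hu hv]
    exact (hasSum_thetaTerm_mul_thetaTerm hq2 hq2' (mul_ne_zero hq0 huv) hq2 hq2' hudv).mul_left v

end ThetaSeries

section FiniteTripleProduct

variable {K : Type*} [Field K] {q : K}

/-- The finite `q`-Pochhammer symbol `(z; q)_n`, the partial product of `qPochhammerInf`. -/
def qPochhammer (z q : K) (n : ℕ) : K := ∏ i ∈ Finset.range n, (1 - z * q ^ i)

@[simp]
theorem qPochhammer_zero (z q : K) : qPochhammer z q 0 = 1 := Finset.prod_range_zero _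

theorem qPochhammer_succ (z q : K) (n : ℕ) :
    qPochhammer z q (n + 1) = qPochhammer z q n * (1 - z * q ^ n) :=
  Finset.prod_range_succ _ _

theorem one_sub_mul_pow_ne_zero (hq : ¬IsOfFinOrder q) (n : ℕ) : 1 - q * q ^ n ≠ 0 := by
  rw [← pow_succ', sub_ne_zero]
  exact fun h => hq (isOfFinOrder_iff_pow_eq_one.mpr ⟨n + 1, n.succ_pos, h.symm⟩)

theorem qPochhammer_self_ne_zero (hq : ¬IsOfFinOrder q) (n : ℕ) : qPochhammer q q n ≠ 0 :=
  Finset.prod_ne_zero_iff.mpr fun i _ => one_sub_mul_pow_ne_zero hq i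

/-- The reciprocal `1 / (q; q)_n`, extended by zero to negative `n`, so that the finite form of the
triple product becomes a sum over all integers. -/
def invQFactorial (q : K) : ℤ → K
  | (n : ℕ) => (qPochhammer q q n)⁻¹
  | Int.negSucc _ => 0

theorem invQFactorial_natCast (q : K) (n : ℕ) : invQFactorial q n = (qPochhammer q q n)⁻¹ := rfl

theorem invQFactorial_of_neg (q : K) : ∀ {n : ℤ}, n < 0 → invQFactorial q n = 0
  | Int.negSucc _, _ => rfl

theorem invQFactorial_sub_one (hq : ¬IsOfFinOrder q) (n : ℤ) :
    invQFactorial q (n - 1) = (1 - q ^ n) * invQFactorial q n := by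
  rcases lt_trichotomy n 0 with h | rfl | h
  · rw [invQFactorial_of_neg q h, invQFactorial_of_neg q (by omega), mul_zero]
  · rw [invQFactorial_of_neg q (by omega), zpow_zero, sub_self, zero_mul]
  · obtain ⟨m, rfl⟩ : ∃ m : ℕ, n = (m + 1 : ℕ) := ⟨(n - 1).toNat, by omega⟩
    have hfactor := one_sub_mul_pow_ne_zero hq m
    have hprod := qPochhammer_self_ne_zero hq m
    rw [Nat.cast_add_one, add_sub_cancel_right, ← Nat.cast_add_one, invQFactorial_natCast,
      invQFactorial_natCast, zpow_natCast, qPochhammer_succ, pow_succ']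
    field_simp

/-- Up to the factor `(q; q)_(m + n - 1)`, this is the `q`-Pascal rule for Gaussian binomial
coefficients. -/
theorem one_sub_zpow_add_mul_invQFactorial_mul_invQFactorial (hq0 : q ≠ 0) (hq : ¬IsOfFinOrder q)
    (m n : ℤ) :
    (1 - q ^ (m + n)) * (invQFactorial q m * invQFactorial q n) =
      invQFactorial q (m - 1) * invQFactorial q n +
        q ^ m * (invQFactorial q m * invQFactorial q (n - 1)) := by
  rw [invQFactorial_sub_one hq, invQFactorial_sub_one hq, zpow_add₀ hq0]
  ring

variable {z : K}

/-- The term of index `n` in the finite form of the triple product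
`(z; q)_M (q / z; q)_N = (q; q)_(M + N) ∑ (-1) ^ n q ^ (n (n - 1) / 2) z ^ n /
((q; q)_(M - n) (q; q)_(N + n))`; it vanishes unless `-N ≤ n ≤ M`. -/
def finiteThetaTerm (q z : K) (M N : ℕ) (n : ℤ) : K :=
  invQFactorial q (M - n) * invQFactorial q (N + n) * thetaTerm q (-z) n

theorem finiteThetaTerm_neg (hq0 : q ≠ 0) (z : K) (M N : ℕ) (n : ℤ) :
    finiteThetaTerm q z M N (-n) = finiteThetaTerm q (q / z) N M n := by
  rw [finiteThetaTerm, finiteThetaTerm, thetaTerm_neg hq0, div_neg, sub_neg_eq_add,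
    ← sub_eq_add_neg, mul_comm (invQFactorial q (M + n))]

theorem finiteThetaTerm_succ_left (hq0 : q ≠ 0) (hq : ¬IsOfFinOrder q) (hz : z ≠ 0) (M N : ℕ)
    (n : ℤ) :
    (1 - q * q ^ (M + N)) * finiteThetaTerm q z (M + 1) N n =
      finiteThetaTerm q z M N n - z * q ^ M * finiteThetaTerm q z M N (n - 1) := by
  have pascal := one_sub_zpow_add_mul_invQFactorial_mul_invQFactorial hq0 hq (M + 1 - n) (N + n)
  have shift : q ^ ((M : ℤ) + 1 - n) * thetaTerm q (-z) n =
      -(z * q ^ M * thetaTerm q (-z) (n - 1)) := by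
    have h := thetaTerm_add_one hq0 (neg_ne_zero.mpr hz) (n - 1)
    rw [sub_add_cancel] at h
    rw [h, ← mul_assoc, ← zpow_add₀ hq0, show (M : ℤ) + 1 - n + (n - 1) = M by ring, zpow_natCast]
    ring
  rw [show (M : ℤ) + 1 - n + (N + n) = (M + N + 1 : ℕ) by push_cast; ring, zpow_natCast, pow_succ',
    show (M : ℤ) + 1 - n - 1 = M - n by ring] at pascal
  simp only [finiteThetaTerm, Nat.cast_add_one]
  rw [show (M : ℤ) - (n - 1) = M + 1 - n by ring, ← add_sub_assoc]
  linear_combination thetaTerm q (-z) n * pascal +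
    invQFactorial q (M + 1 - n) * invQFactorial q (N + n - 1) * shift

theorem finiteThetaTerm_zero_zero (q z : K) : finiteThetaTerm q z 0 0 = Pi.single 0 1 := by
  funext n
  rcases lt_trichotomy n 0 with h | rfl | h
  · rw [Pi.single_eq_of_ne h.ne, finiteThetaTerm,
      invQFactorial_of_neg q (n := (0 : ℕ) + n) (by simpa using h), mul_zero, zero_mul]
  · simp [finiteThetaTerm, invQFactorial]
  · rw [Pi.single_eq_of_ne h.ne', finiteThetaTerm,
      invQFactorial_of_neg q (n := (0 : ℕ) - n) (by simpa using h), zero_mul, zero_mul]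

variable [TopologicalSpace K]

theorem hasSum_finiteThetaTerm_symm (hq0 : q ≠ 0) {M N : ℕ} {s : K}
    (h : HasSum (finiteThetaTerm q (q / z) N M) s) : HasSum (finiteThetaTerm q z M N) s := by
  rw [← (Equiv.neg ℤ).hasSum_iff]
  simpa only [Function.comp_def, Equiv.neg_apply, finiteThetaTerm_neg hq0] using h

variable [IsTopologicalRing K]

theorem hasSum_finiteThetaTerm_succ_left (hq0 : q ≠ 0) (hq : ¬IsOfFinOrder q) (hz : z ≠ 0)
    {M N : ℕ} {s : K} (h : HasSum (finiteThetaTerm q z M N) s) :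
    HasSum (finiteThetaTerm q z (M + 1) N) ((1 - z * q ^ M) / (1 - q * q ^ (M + N)) * s) := by
  have shifted := ((Equiv.subRight (1 : ℤ)).hasSum_iff.mpr h).mul_left (z * q ^ M)
  have hsum := (h.sub shifted).div_const (1 - q * q ^ (M + N))
  convert hsum using 1
  · funext n
    exact eq_div_of_mul_eq (one_sub_mul_pow_ne_zero hq _)
      ((mul_comm _ _).trans (finiteThetaTerm_succ_left hq0 hq hz M N n))
  · ring

theorem hasSum_finiteThetaTerm_of_left_zero (hq0 : q ≠ 0) (hq : ¬IsOfFinOrder q) (hz : z ≠ 0)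
    (N : ℕ)
    (h : HasSum (finiteThetaTerm q z 0 N) (qPochhammer (q / z) q N / qPochhammer q q N)) (M : ℕ) :
    HasSum (finiteThetaTerm q z M N)
      (qPochhammer z q M * qPochhammer (q / z) q N / qPochhammer q q (M + N)) := by
  induction M with
  | zero => simpa using h
  | succ M ih =>
    convert hasSum_finiteThetaTerm_succ_left hq0 hq hz ih using 1
    rw [div_mul_div_comm, qPochhammer_succ, add_right_comm, qPochhammer_succ,
      mul_comm (qPochhammer q q _)]
    ring

theorem hasSum_finiteThetaTerm (hq0 : q ≠ 0) (hq : ¬IsOfFinOrder q) (hz : z ≠ 0) (M N : ℕ) :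
    HasSum (finiteThetaTerm q z M N)
      (qPochhammer z q M * qPochhammer (q / z) q N / qPochhammer q q (M + N)) := by
  refine hasSum_finiteThetaTerm_of_left_zero hq0 hq hz N (hasSum_finiteThetaTerm_symm hq0 ?_) M
  have base : HasSum (finiteThetaTerm q (q / z) 0 0) 1 := by
    rw [finiteThetaTerm_zero_zero]
    exact hasSum_pi_single 0 1
  simpa using
    hasSum_finiteThetaTerm_of_left_zero hq0 hq (div_ne_zero hq0 hz) 0 (by simpa using base) N

end FiniteTripleProduct

section JacobiTripleProduct

theorem not_isOfFinOrder_of_norm_lt_one {𝕜 : Type*} [NormedField 𝕜] {q : 𝕜} (hq : ‖q‖ < 1) :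
    ¬IsOfFinOrder q :=
  fun h => hq.ne h.norm_eq_one

theorem summable_norm_neg_mul_pow {𝕜 : Type*} [NormedField 𝕜] {q : 𝕜} (hq : ‖q‖ < 1) (z : 𝕜) :
    Summable fun j : ℕ => ‖-(z * q ^ j)‖ := by
  simpa using (summable_geometric_of_lt_one (norm_nonneg _) hq).mul_left ‖z‖

theorem multipliable_one_sub_mul_pow {𝕜 : Type*} [NormedField 𝕜] [CompleteSpace 𝕜] {q : 𝕜}
    (hq : ‖q‖ < 1) (z : 𝕜) : Multipliable fun j : ℕ => 1 - z * q ^ j := by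
  simpa only [sub_eq_add_neg] using
    multipliable_one_add_of_summable (summable_norm_neg_mul_pow hq z)

variable {p : ℂ}

theorem tendsto_qPochhammer (hp : ‖p‖ < 1) (z : ℂ) :
    Tendsto (qPochhammer z p) atTop (𝓝 (qPochhammerInf z p)) :=
  (multipliable_one_sub_mul_pow hp z).tendsto_prod_tprod_nat

theorem qPochhammerInf_self_ne_zero (hp : ‖p‖ < 1) : qPochhammerInf p p ≠ 0 := by
  have factor_ne_zero := one_sub_mul_pow_ne_zero (not_isOfFinOrder_of_norm_lt_one hp)
  simp only [qPochhammerInf, sub_eq_add_neg] at factor_ne_zero ⊢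
  exact tprod_one_add_ne_zero_of_summable factor_ne_zero (summable_norm_neg_mul_pow hp p)

theorem theta_eq_qPochhammerInf_mul_qPochhammerInf (hp : ‖p‖ < 1) (z : ℂ) :
    theta z p = qPochhammerInf z p * qPochhammerInf (p / z) p := by
  rw [qPochhammerInf, qPochhammerInf, ← (multipliable_one_sub_mul_pow hp z).tprod_mul
    (multipliable_one_sub_mul_pow hp (p / z)), theta]
  exact tprod_congr fun j => by ring

theorem tendsto_invQFactorial (hp : ‖p‖ < 1) :
    Tendsto (invQFactorial p) atTop (𝓝 (qPochhammerInf p p)⁻¹) := by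
  rw [← Nat.map_cast_int_atTop, tendsto_map'_iff]
  exact (tendsto_qPochhammer hp p).inv₀ (qPochhammerInf_self_ne_zero hp)

theorem exists_norm_invQFactorial_le (hp : ‖p‖ < 1) : ∃ C, ∀ n, ‖invQFactorial p n‖ ≤ C := by
  obtain ⟨C, hC⟩ :=
    ((tendsto_invQFactorial hp).comp tendsto_natCast_atTop_atTop).norm.bddAbove_range
  have natCast_le (n : ℕ) : ‖invQFactorial p n‖ ≤ C := hC ⟨n, rfl⟩
  refine ⟨C, fun n => ?_⟩
  rcases lt_or_ge n 0 with hn | hn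
  · rw [invQFactorial_of_neg p hn, norm_zero]
    exact (norm_nonneg _).trans (natCast_le 0)
  · lift n to ℕ using hn
    exact natCast_le n

theorem tendsto_tsum_finiteThetaTerm {z : ℂ} (hp0 : p ≠ 0) (hp : ‖p‖ < 1) (hz : z ≠ 0) :
    Tendsto (fun N : ℕ => ∑' n, finiteThetaTerm p z N N n) atTop
      (𝓝 ((qPochhammerInf p p)⁻¹ * (qPochhammerInf p p)⁻¹ * thetaSeries p (-z))) := by
  obtain ⟨C, hC⟩ := exists_norm_invQFactorial_le hp
  have hC0 : 0 ≤ C := (norm_nonneg _).trans (hC 0)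
  have tendsto_shift (n : ℤ) :
      Tendsto (fun N : ℕ => invQFactorial p (N + n)) atTop (𝓝 (qPochhammerInf p p)⁻¹) :=
    (tendsto_invQFactorial hp).comp
      (tendsto_atTop_add_const_right _ n tendsto_natCast_atTop_atTop)
  rw [thetaSeries, ← tsum_mul_left]
  refine tendsto_tsum_of_dominated_convergence
    ((summable_norm_thetaTerm hp0 hp (neg_ne_zero.mpr hz)).mul_left (C * C)) (fun n => ?_)
    (Eventually.of_forall fun N n => ?_)
  · exact ((tendsto_shift (-n)).mul (tendsto_shift n)).mul_const _
  · rw [finiteThetaTerm, norm_mul, norm_mul]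
    gcongr <;> exact hC _

theorem qPochhammerInf_mul_theta {z : ℂ} (hp0 : p ≠ 0) (hp : ‖p‖ < 1) (hz : z ≠ 0) :
    qPochhammerInf p p * theta z p = thetaSeries p (-z) := by
  have hne := qPochhammerInf_self_ne_zero hp
  have product_side : Tendsto (fun N : ℕ => ∑' n, finiteThetaTerm p z N N n) atTop
      (𝓝 (theta z p / qPochhammerInf p p)) := by
    simp only [(hasSum_finiteThetaTerm hp0 (not_isOfFinOrder_of_norm_lt_one hp) hz _ _).tsum_eq,
      theta_eq_qPochhammerInf_mul_qPochhammerInf hp]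
    exact ((tendsto_qPochhammer hp z).mul (tendsto_qPochhammer hp (p / z))).div
      ((tendsto_qPochhammer hp p).comp (tendsto_id.atTop_add_atTop tendsto_id)) hne
  have h := tendsto_nhds_unique product_side (tendsto_tsum_finiteThetaTerm hp0 hp hz)
  rw [div_eq_iff hne] at h
  rw [h]
  field_simp

end JacobiTripleProduct

section Addition

variable {p : ℂ}

theorem theta_zero_right (z : ℂ) : theta z 0 = 1 - z := by
  rw [theta, tprod_eq_mulSingle 0 fun j hj => by simp [hj]]
  simp

theorem exists_mul_theta_mul_theta_eq_sub (hp : ‖p‖ < 1) :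
    ∃ F G : ℂ → ℂ, ∀ a b, a ≠ 0 → b ≠ 0 →
      b * (theta (a * b) p * theta (a / b) p) = F a * G b - G a * F b := by
  rcases eq_or_ne p 0 with rfl | hp0
  · refine ⟨fun t => 1 + t ^ 2, fun t => t, fun a b _ hb => ?_⟩
    simp only [theta_zero_right]
    field_simp
    ring
  · have hne := qPochhammerInf_self_ne_zero hp
    refine ⟨fun t => thetaSeries (p ^ 2) (t ^ 2) / qPochhammerInf p p,
      fun t => t * thetaSeries (p ^ 2) (p * t ^ 2) / qPochhammerInf p p, fun a b ha hb => ?_⟩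
    have hab := mul_ne_zero ha hb
    have hab' := div_ne_zero ha hb
    have h := thetaSeries_mul_thetaSeries hp0 hp (neg_ne_zero.mpr hab) (neg_ne_zero.mpr hab')
    rw [show -(a * b) * -(a / b) = a ^ 2 by field_simp,
      show -(a * b) / -(a / b) = b ^ 2 by field_simp,
      ← qPochhammerInf_mul_theta hp0 hp hab,
      ← qPochhammerInf_mul_theta hp0 hp hab'] at h
    field_simp at h ⊢
    linear_combination h

end Addition

theorem theta_riemann_addition (p x y w z : ℂ) (hp : ‖p‖ < 1)
    (hx : x ≠ 0) (hy : y ≠ 0) (hw : w ≠ 0) (hz : z ≠ 0) :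
    theta (x * w) p * theta (x / w) p * theta (y * z) p * theta (y / z) p -
      theta (x * z) p * theta (x / z) p * theta (y * w) p * theta (y / w) p =
    y / w * (theta (x * y) p * theta (x / y) p * theta (w * z) p * theta (w / z) p) := by
  obtain ⟨F, G, hFG⟩ := exists_mul_theta_mul_theta_eq_sub hp
  let D (a b : ℂ) : ℂ := F a * G b - G a * F b
  have theta_mul_theta {a b : ℂ} (ha : a ≠ 0) (hb : b ≠ 0) :
      theta (a * b) p * theta (a / b) p = D a b / b := by
    rw [eq_div_iff hb, mul_comm, hFG a b ha hb]
  have plucker : D x w * D y z - D x z * D y w = D x y * D w z := by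
    simp only [D]
    ring
  simp only [mul_assoc (theta _ p * theta _ p)]
  rw [theta_mul_theta hx hw, theta_mul_theta hy hz, theta_mul_theta hx hz, theta_mul_theta hy hw,
    theta_mul_theta hx hy, theta_mul_theta hw hz]
  field_simp
  exact plucker
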